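/- Let w̄ be the unique fixed point of θ and set ψ = θ ∘ θ. If ψ'(w̄) > 1, then ψ has exactly three fixed points w¹ < w̄ < w²; moreover θ(w¹) = w², θ(w²) = w¹, and ψ'(w¹) = ψ'(w²) = θ'(w¹)·θ'(w²) < 1. These two non-central fixed points correspond to two stable non-symmetric rest points obtained from each other by exchanging the identities of the players, while the symmetric rest point corresponding to w̄ is unstable. -/

import Mathlib

/-!
Since `θ` is decreasing, it exchanges the two half lines cut off by `w̄`, so everything reduces to
the fixed points of `ψ` above `w̄`. One exists by the intermediate value theorem: `ψ w - w` is
positive just above `w̄` because `ψ'(w̄) > 1`, and negative far out because `ψ` is bounded.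

The key fact (`deriv_mul_lt_one`) is that a genuine 2-cycle `x ≠ y` of `θ` always has multiplier
`θ'(x) θ'(y) < 1`. With `X = e^x`, `Y = e^y`, the cycle equations give
`y - x = β δ (Y - X) / ((1 + X) (1 + Y))`, while
`θ'(x) θ'(y) = (β δ)² X Y / ((1 + X)² (1 + Y)²)`; eliminating `β δ`, the claim is
`(y - x)² X Y < (Y - X)²`, that is `|d| < |sinh d|` for `d = (y - x) / 2`.

Hence `ψ w - w` has negative derivative at each of its zeros above `w̄`, and a function which
crosses zero only downwards has at most one zero (`no_two_down_crossings`).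
-/

/-- `ρ(w) = 1/(1 + e^w)`. -/
noncomputable def logitρ (w : ℝ) : ℝ := 1 / (1 + Real.exp w)

/-- `θ(w) = β(κ + δ ρ(w))`, the one player map in the symmetric `2×2` game. -/
noncomputable def mapθ (κ δ β w : ℝ) : ℝ := β * (κ + δ * logitρ w)

open Filter Topology

theorem hasDerivAt_mapθ (κ δ β w : ℝ) :
    HasDerivAt (mapθ κ δ β) (-(β * δ * (Real.exp w / (1 + Real.exp w) ^ 2))) w := by
  have h1 : HasDerivAt (fun w => 1 + Real.exp w) (Real.exp w) w :=
    (Real.hasDerivAt_exp w).const_add 1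
  have h0 : (1 + Real.exp w) ≠ 0 := by positivity
  have h2 := (((h1.inv h0).const_mul δ).const_add κ).const_mul β
  refine (h2.congr_deriv (by ring)).congr_of_eventuallyEq (Eventually.of_forall fun t => ?_)
  simp [mapθ, logitρ]

theorem mapθ_strictAnti {κ δ β : ℝ} (hδ : 0 < δ) (hβ : 0 < β) : StrictAnti (mapθ κ δ β) := by
  intro x y hxy
  have h : logitρ y < logitρ x :=
    one_div_lt_one_div_of_lt (by positivity) (by simpa using hxy)
  unfold mapθ
  gcongr

theorem mapθ_lt {κ δ β : ℝ} (hδ : 0 < δ) (hβ : 0 < β) (w : ℝ) :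
    mapθ κ δ β w < β * (κ + δ) := by
  have h : logitρ w < 1 := by
    unfold logitρ
    rw [div_lt_one (by positivity)]
    linarith [Real.exp_pos w]
  unfold mapθ
  have : δ * logitρ w < δ := by nlinarith
  gcongr

/-- The inequality `|d| < |sinh d|` for `d = (y - x) / 2`, written in exponentials. -/
theorem sq_sub_mul_exp_lt {x y : ℝ} (hxy : x < y) :
    (y - x) ^ 2 * (Real.exp x * Real.exp y) < (Real.exp y - Real.exp x) ^ 2 := by
  set d := (y - x) / 2 with hd
  set s := (x + y) / 2 with hs
  have hd0 : 0 < d := by rw [hd]; linarith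
  have hx : x = s + -d := by rw [hd, hs]; ring
  have hy : y = s + d := by rw [hd, hs]; ring
  have hsinh : d < Real.sinh d := Real.self_lt_sinh_iff.mpr hd0
  have e1 : Real.exp y - Real.exp x = 2 * Real.exp s * Real.sinh d := by
    rw [hx, hy, Real.exp_add, Real.exp_add, Real.sinh_eq]; ring
  have e2 : Real.exp x * Real.exp y = Real.exp s ^ 2 := by
    rw [← Real.exp_add, pow_two, ← Real.exp_add]; congr 1; rw [hs]; ring
  have e3 : y - x = 2 * d := by rw [hd]; ring
  rw [e1, e2, e3]
  have : d ^ 2 < Real.sinh d ^ 2 := by gcongr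
  have hp : 0 < Real.exp s ^ 2 := by positivity
  nlinarith

/-- Every 2-cycle of `θ` that is not a fixed point is linearly stable. -/
theorem deriv_mul_lt_one {κ δ β x y : ℝ} (hxy : x < y)
    (h1 : mapθ κ δ β x = y) (h2 : mapθ κ δ β y = x) :
    deriv (mapθ κ δ β) x * deriv (mapθ κ δ β) y < 1 := by
  rw [(hasDerivAt_mapθ κ δ β x).deriv, (hasDerivAt_mapθ κ δ β y).deriv]
  have key := sq_sub_mul_exp_lt hxy
  have hexp : Real.exp x < Real.exp y := Real.exp_lt_exp.mpr hxy
  have e : y - x = β * δ * ((Real.exp y - Real.exp x) /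
      ((1 + Real.exp x) * (1 + Real.exp y))) := by
    have hX : 1 + Real.exp x ≠ 0 := by positivity
    have hY : 1 + Real.exp y ≠ 0 := by positivity
    have : y - x = mapθ κ δ β x - mapθ κ δ β y := by rw [h1, h2]
    rw [this]
    unfold mapθ logitρ
    field_simp
    ring
  have hX := Real.exp_pos x
  have hY := Real.exp_pos y
  rw [e] at key
  generalize Real.exp x = X at *
  generalize Real.exp y = Y at *
  have hp : 0 < (Y - X) ^ 2 := by
    have : 0 < Y - X := by linarith
    positivity
  have e2 : (β * δ * ((Y - X) / ((1 + X) * (1 + Y)))) ^ 2 * (X * Y) =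
      (-(β * δ * (X / (1 + X) ^ 2)) * -(β * δ * (Y / (1 + Y) ^ 2))) * (Y - X) ^ 2 := by
    field_simp
  rw [e2] at key
  nlinarith

/-- A differentiable function whose derivative is negative at all its zeros in `[a, b]` cannot
vanish at both ends. -/
theorem no_two_down_crossings {f f' : ℝ → ℝ} (hf : ∀ t, HasDerivAt f (f' t) t) {a b : ℝ}
    (hab : a < b) (ha : f a = 0) (hb : f b = 0)
    (h : ∀ t ∈ Set.Icc a b, f t = 0 → f' t < 0) : False := by
  have hle : ∀ ⦃t⦄, t ∈ Set.Icc a b → f t ≤ 0 :=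
    image_le_of_deriv_right_lt_deriv_boundary (B := fun _ => 0) (B' := fun _ => 0)
      (fun t _ => (hf t).continuousAt.continuousWithinAt)
      (fun t _ => (hf t).hasDerivWithinAt) ha.le (fun t => hasDerivAt_const t 0)
      (fun t ht h0 => h t ⟨ht.1, ht.2.le⟩ h0)
  -- The negative slope at `b` makes `f` positive just to the left of `b`.
  have hs := (hasDerivAt_iff_tendsto_slope.mp (hf b)).mono_left
    (nhdsWithin_mono b (fun t (ht : t ∈ Set.Iio b) => ne_of_lt ht))
  have hev := hs.eventually_lt_const (h b ⟨hab.le, le_rfl⟩ hb)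
  obtain ⟨t, hst, hta, htb⟩ := (hev.and (Ioo_mem_nhdsLT hab)).exists
  rw [slope_def_field, hb, sub_zero] at hst
  have : 0 ≤ f t / (t - b) := div_nonneg_of_nonpos (hle ⟨hta.le, htb.le⟩) (by linarith)
  linarith

/-- If `w̄` is the (unique) fixed point of `θ` and `ψ = θ ∘ θ` satisfies
`ψ'(w̄) > 1`, then `ψ` has exactly three fixed points `w¹ < w̄ < w²`, exchanged by
`θ`, with `ψ'(w¹) = ψ'(w²) = θ'(w¹)·θ'(w²) < 1` (two stable non-symmetric rest
points, the symmetric one being unstable). -/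
theorem symmetric_rest_point_unstable_two_stable (κ δ β : ℝ) (hδ : 0 < δ) (hβ : 0 < β)
    (wb : ℝ) (hwb : mapθ κ δ β wb = wb)
    (hunstab : 1 < deriv (mapθ κ δ β ∘ mapθ κ δ β) wb) :
    ∃ w1 w2 : ℝ, w1 < wb ∧ wb < w2 ∧
      {w : ℝ | (mapθ κ δ β ∘ mapθ κ δ β) w = w} = {w1, wb, w2} ∧
      mapθ κ δ β w1 = w2 ∧ mapθ κ δ β w2 = w1 ∧
      deriv (mapθ κ δ β ∘ mapθ κ δ β) w1 = deriv (mapθ κ δ β ∘ mapθ κ δ β) w2 ∧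
      deriv (mapθ κ δ β ∘ mapθ κ δ β) w1 = deriv (mapθ κ δ β) w1 * deriv (mapθ κ δ β) w2 ∧
      deriv (mapθ κ δ β ∘ mapθ κ δ β) w1 < 1 := by
  have hdiff : ∀ w, DifferentiableAt ℝ (mapθ κ δ β) w :=
    fun w => (hasDerivAt_mapθ κ δ β w).differentiableAt
  have hanti : StrictAnti (mapθ κ δ β) := mapθ_strictAnti hδ hβ
  have hbound : ∀ w, mapθ κ δ β w < β * (κ + δ) := mapθ_lt hδ hβ
  have hstable : ∀ x y, x < y → mapθ κ δ β x = y → mapθ κ δ β y = x →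
      deriv (mapθ κ δ β) x * deriv (mapθ κ δ β) y < 1 := fun x y => deriv_mul_lt_one
  generalize mapθ κ δ β = θ at *
  have hψ : ∀ w, deriv (θ ∘ θ) w = deriv θ (θ w) * deriv θ w :=
    fun w => deriv_comp w (hdiff _) (hdiff _)
  have hφ : ∀ w, HasDerivAt (fun w => θ (θ w) - w) (deriv (θ ∘ θ) w - 1) w := fun w =>
    (((hdiff (θ w)).comp w (hdiff w)).hasDerivAt).sub (hasDerivAt_id w)
  have huniq : ∀ a b, wb < a → a < b → θ (θ a) = a → θ (θ b) = b → False := by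
    intro a b ha hab h1 h2
    refine no_two_down_crossings hφ hab (sub_eq_zero.mpr h1) (sub_eq_zero.mpr h2) ?_
    intro t ht h0
    have hwt : wb < t := ha.trans_le ht.1
    have hlt : θ t < t := by
      have := hanti hwt
      linarith
    have := hstable (θ t) t hlt (sub_eq_zero.mp h0) rfl
    rw [hψ]
    linarith
  obtain ⟨t, hwt, ht⟩ : ∃ t, wb < t ∧ t < θ (θ t) := by
    have hs := (hasDerivAt_iff_tendsto_slope.mp (hφ wb)).mono_left
      (nhdsWithin_mono wb (fun t (ht : t ∈ Set.Ioi wb) => ne_of_gt ht))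
    have hev := hs.eventually_const_lt (sub_pos.mpr hunstab)
    obtain ⟨t, hst, htb⟩ := (hev.and self_mem_nhdsWithin).exists
    have htb : wb < t := htb
    refine ⟨t, htb, ?_⟩
    rw [slope_def_field, hwb, hwb, sub_self, sub_zero, div_pos_iff_of_pos_right (by linarith)] at hst
    linarith
  obtain ⟨w2, hw2, hfix⟩ : ∃ w2, wb < w2 ∧ θ (θ w2) = w2 := by
    have htM : t ≤ β * (κ + δ) := (ht.trans (hbound _)).le
    have hc : ContinuousOn (fun w => θ (θ w) - w) (Set.Icc t (β * (κ + δ))) :=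
      fun w _ => (hφ w).continuousAt.continuousWithinAt
    obtain ⟨w, hw, h0⟩ := intermediate_value_Icc' htM hc
      (show (0 : ℝ) ∈ Set.Icc _ _ from ⟨by linarith [hbound (θ (β * (κ + δ)))], by linarith⟩)
    exact ⟨w, hwt.trans_le hw.1, sub_eq_zero.mp h0⟩
  have huniq' : ∀ w, wb < w → θ (θ w) = w → w = w2 := by
    intro w hw h
    rcases lt_trichotomy w w2 with h1 | h1 | h1
    · exact (huniq w w2 hw h1 h hfix).elim
    · exact h1
    · exact (huniq w2 w hw2 h1 hfix h).elim
  have hw1 : θ w2 < wb := hwb ▸ hanti hw2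
  refine ⟨θ w2, w2, hw1, hw2, ?_, hfix, rfl, ?_, ?_, ?_⟩
  · ext w
    simp only [Function.comp_apply, Set.mem_ofPred_eq, Set.mem_insert_iff, Set.mem_singleton_iff]
    constructor
    · intro h
      rcases lt_trichotomy w wb with h1 | h1 | h1
      · left
        have h2 : wb < θ w := by
          have := hanti h1
          rwa [hwb] at this
        rw [← huniq' (θ w) h2 (by rw [h]), h]
      · exact Or.inr (Or.inl h1)
      · exact Or.inr (Or.inr (huniq' w h1 h))
    · rintro (rfl | rfl | rfl)
      · rw [hfix]
      · rw [hwb, hwb]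
      · exact hfix
  · rw [hψ, hψ, hfix, mul_comm]
  · rw [hψ, hfix, mul_comm]
  · rw [hψ, hfix, mul_comm]
    exact hstable _ _ (hw1.trans hw2) hfix rfl
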